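/- arXiv:1810.01210 — 2 statements merged into one kernel-verified Lean document; each statement's English description precedes it below -/
import Mathlib

section
/- Let κ be the 3-uniform morphism on the 6-letter alphabet {1̄,1̲,2̄,2̲,3̄,3̲} defined by κ(1̄)=1̄2̲3̄, κ(2̄)=2̄3̲1̄, κ(3̄)=3̄1̲2̄, κ(1̲)=3̲2̄1̲, κ(2̲)=1̲3̄2̲, κ(3̲)=2̲1̄3̲, and let π be the projection sending both ā and a̲ to a for a ∈ {1,2,3}. Let K_t = π(κ^t(1̄)). Then for every t ≥ 0, the sequence K_t is non-repetitive. -/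
/-!
The words `κ^t(1̄)` are prefixes of one infinite word `hexY : ℕ → Fin 6`, in which overlined and
underlined letters alternate. Let `x n` be the projected word and `D n ∈ {1, 2}` the difference
`x (n+1) - x n` modulo `3`. The morphism says that `D` is a Toeplitz sequence: reading `D` in groups
of six gives `1, 1, D(2m), 2, 2, D(2m+1)`; that is, `D n` is determined by `n % 6` unless
`n % 3 = 2`, and `D (3n+2) = D n`.

A square of period `p` starting at `i` makes `D` agree with its shift by `p` on a window of length
`p - 1`, and makes the sum of `D` over `[i, i+p)` divisible by `3`. If `6 ∤ p`, the prescribed values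
of `D` give a contradiction: directly when `p` is divisible by `2` or `3` (with `p = 2` using the
sum), and for the other `p ≥ 11` by forcing three consecutive values `D n, D (n+1), D (n+2)` to
alternate, which never happens; `p = 1, 5, 7` again use the sum. If `p = 6q`, the positions `3n+2` of
the square form a square of period `2q` in `x`, so descent on `p` concludes.
-/

/-- The hexagonal morphism `κ` on the auxiliary alphabet `{1̄,1̲,2̄,2̲,3̄,3̲}`,
encoded as `Fin 6` via `0=1̄, 1=1̲, 2=2̄, 3=2̲, 4=3̄, 5=3̲`:
`κ(1̄)=1̄2̲3̄, κ(2̄)=2̄3̲1̄, κ(3̄)=3̄1̲2̄, κ(1̲)=3̲2̄1̲, κ(2̲)=1̲3̄2̲, κ(3̲)=2̲1̄3̲`. -/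
def hexKappa : Fin 6 → List (Fin 6) :=
  ![[0, 3, 4], [5, 2, 1], [2, 5, 0], [1, 4, 3], [4, 1, 2], [3, 0, 5]]

/-- The projection `π` sending both `ā` and `a̲` to `a`, with `{1,2,3}` encoded as `Fin 3`
via `0=1, 1=2, 2=3`. -/
def hexPi : Fin 6 → Fin 3 := ![0, 0, 1, 1, 2, 2]

/-- The `t`-fold iterate `κ^t(1̄)` as a word over the auxiliary alphabet. -/
def hexIter : ℕ → List (Fin 6)
  | 0 => [0]
  | t + 1 => (hexIter t).flatMap hexKappa

/-- The sequence `K_t = π(κ^t(1̄))`. -/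
def hexK (t : ℕ) : List (Fin 3) := (hexIter t).map hexPi

/-- A sequence is non-repetitive (Thue) if it contains no factor `w ++ w` with `w` nonempty. -/
def NonRep {α : Type*} (s : List α) : Prop :=
  ∀ w : List α, w ≠ [] → ¬ (w ++ w) <:+: s

/-! ### The infinite fixed point -/

/-- The infinite fixed point of `hexKappa` starting with `1̄`. -/
def hexY (n : ℕ) : Fin 6 :=
  if n = 0 then 0 else (hexKappa (hexY (n / 3))).getD (n % 3) 0
termination_by n
decreasing_by omega

theorem hexY_eq (n : ℕ) : hexY n = (hexKappa (hexY (n / 3))).getD (n % 3) 0 := by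
  by_cases h : n = 0
  · subst h
    have h0 : hexY 0 = 0 := by rw [hexY]; simp
    simp [h0, hexKappa]
  · conv_lhs => rw [hexY]
    simp [h]

theorem hexKappa_hexY (n : ℕ) :
    hexKappa (hexY n) = [hexY (3 * n), hexY (3 * n + 1), hexY (3 * n + 2)] := by
  rw [hexY_eq (3 * n), hexY_eq (3 * n + 1), hexY_eq (3 * n + 2)]
  rw [show 3 * n / 3 = n by omega, show (3 * n + 1) / 3 = n by omega,
    show (3 * n + 2) / 3 = n by omega, show 3 * n % 3 = 0 by omega,
    show (3 * n + 1) % 3 = 1 by omega, show (3 * n + 2) % 3 = 2 by omega]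
  generalize hexY n = a
  revert a
  decide

theorem flatMap_hexY (N : ℕ) :
    ((List.range N).map hexY).flatMap hexKappa = (List.range (3 * N)).map hexY := by
  induction N with
  | zero => simp
  | succ N ih =>
    rw [List.range_succ, List.map_append, List.flatMap_append, ih,
      show 3 * (N + 1) = 3 * N + 1 + 1 + 1 by ring, List.range_succ, List.range_succ,
      List.range_succ]
    simp [hexKappa_hexY]

theorem hexIter_eq (t : ℕ) : hexIter t = (List.range (3 ^ t)).map hexY := by
  induction t with
  | zero => simp [hexIter, hexY]
  | succ t ih => rw [hexIter, ih, flatMap_hexY, pow_succ']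

/-- Overlined letters (even codes) stand exactly at the even positions. -/
theorem hexY_parity (n : ℕ) : (hexY n).val % 2 = n % 2 := by
  induction n using Nat.strong_induction_on with
  | _ n ih =>
    by_cases h : n = 0
    · subst h; simp [hexY]
    · have h1 := ih (n / 3) (by omega)
      rw [hexY_eq]
      have key : ∀ a : Fin 6, ∀ j : Fin 3,
          ((hexKappa a).getD j.val 0).val % 2 = (a.val + j.val) % 2 := by decide
      have := key (hexY (n / 3)) ⟨n % 3, Nat.mod_lt _ (by norm_num)⟩
      simp only at this
      rw [this]
      omega

/-- The infinite projected word, as natural numbers below `3`. -/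
def hexX (n : ℕ) : ℕ := (hexPi (hexY n)).val

theorem hexX_lt (n : ℕ) : hexX n < 3 := (hexPi (hexY n)).isLt

theorem hexX_even (n : ℕ) (h : n % 2 = 0) : hexX (3 * n) = hexX n ∧
    hexX (3 * n + 1) = (hexX n + 1) % 3 ∧ hexX (3 * n + 2) = (hexX n + 2) % 3 := by
  have hk := hexKappa_hexY n
  have hp := hexY_parity n
  rw [h] at hp
  simp only [hexX]
  generalize hexY n = a at *
  generalize hexY (3 * n) = b at *
  generalize hexY (3 * n + 1) = c at *
  generalize hexY (3 * n + 2) = d at *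
  revert a
  revert b c d
  decide

theorem hexX_odd (n : ℕ) (h : n % 2 = 1) : hexX (3 * n) = (hexX n + 2) % 3 ∧
    hexX (3 * n + 1) = (hexX n + 1) % 3 ∧ hexX (3 * n + 2) = hexX n := by
  have hk := hexKappa_hexY n
  have hp := hexY_parity n
  rw [h] at hp
  simp only [hexX]
  generalize hexY n = a at *
  generalize hexY (3 * n) = b at *
  generalize hexY (3 * n + 1) = c at *
  generalize hexY (3 * n + 2) = d at *
  revert a
  revert b c d
  decide

/-! ### The Toeplitz difference sequence -/

/-- The difference sequence `x (n+1) - x n` modulo `3`; the summand `3` avoids truncation. -/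
def hexD (n : ℕ) : ℕ := (hexX (n + 1) + 3 - hexX n) % 3

theorem hexD_fixed (n : ℕ) (h : n % 3 ≠ 2) :
    (n % 6 < 3 → hexD n = 1) ∧ (3 ≤ n % 6 → hexD n = 2) := by
  obtain ⟨m, hm⟩ : ∃ m, m = n / 3 := ⟨_, rfl⟩
  have hlt := hexX_lt m
  unfold hexD
  have hn : n = 3 * m ∨ n = 3 * m + 1 := by omega
  rcases Nat.mod_two_eq_zero_or_one m with h2 | h2
  · have := hexX_even m h2
    rcases hn with rfl | rfl <;> grind
  · have := hexX_odd m h2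
    rcases hn with rfl | rfl <;> grind

/-- The Toeplitz self-similarity of the difference sequence. -/
theorem hexD_toeplitz (n : ℕ) : hexD (3 * n + 2) = hexD n := by
  have h1 := hexX_lt n
  have h2 := hexX_lt (n + 1)
  unfold hexD
  rw [show 3 * n + 2 + 1 = 3 * (n + 1) by ring]
  rcases Nat.mod_two_eq_zero_or_one n with h | h
  · have a := hexX_even n h
    have b := hexX_odd (n + 1) (by omega)
    omega
  · have a := hexX_odd n h
    have b := hexX_even (n + 1) (by omega)
    omega

theorem hexD_range (n : ℕ) : hexD n = 1 ∨ hexD n = 2 := by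
  induction n using Nat.strong_induction_on with
  | _ n ih =>
    by_cases h : n % 3 = 2
    · have := ih (n / 3) (by omega)
      rwa [← hexD_toeplitz, show 3 * (n / 3) + 2 = n by omega] at this
    · have := hexD_fixed n h
      omega

/-- The range of `hexD` and its prescribed values, residue by residue, in a form `omega` can use. -/
theorem hexD_local (n : ℕ) : (hexD n = 1 ∨ hexD n = 2) ∧
    (n % 6 = 0 → hexD n = 1) ∧ (n % 6 = 1 → hexD n = 1) ∧
    (n % 6 = 3 → hexD n = 2) ∧ (n % 6 = 4 → hexD n = 2) := by
  refine ⟨hexD_range n, fun h => ?_, fun h => ?_, fun h => ?_, fun h => ?_⟩ <;>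
  · have := hexD_fixed n (by omega)
    omega

/-- Three consecutive differences never alternate. -/
theorem hexD_not_alt (n : ℕ) : hexD n = hexD (n + 1) ∨ hexD (n + 1) = hexD (n + 2) := by
  have h0 := hexD_local n
  have h1 := hexD_local (n + 1)
  have h2 := hexD_local (n + 2)
  omega

theorem hexX_succ (n : ℕ) : hexX (n + 1) % 3 = (hexX n + hexD n) % 3 := by
  have h1 := hexX_lt n
  have h2 := hexX_lt (n + 1)
  unfold hexD
  omega

/-! ### Excluding squares by the residue of the period modulo 6 -/

/-- Periods of the form `6q`: the letters at positions `3n+2` of the square form a square of period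
`2q`. -/
theorem hexX_square_descent (q i : ℕ)
    (H : ∀ k < 6 * q, hexX (i + k) = hexX (i + k + 6 * q)) (k : ℕ) (hk : k < 2 * q) :
    hexX (i / 3 + k) = hexX (i / 3 + k + 2 * q) := by
  obtain ⟨n, hn⟩ : ∃ n, n = i / 3 + k := ⟨_, rfl⟩
  rw [← hn]
  have a := H (3 * n + 2 - i) (by omega)
  rw [show i + (3 * n + 2 - i) = 3 * n + 2 by omega,
    show 3 * n + 2 + 6 * q = 3 * (n + 2 * q) + 2 by ring] at a
  have l1 := hexX_lt n
  have l2 := hexX_lt (n + 2 * q)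
  rcases Nat.mod_two_eq_zero_or_one n with h | h
  · have b := hexX_even n h
    have c := hexX_even (n + 2 * q) (by omega)
    omega
  · have b := hexX_odd n h
    have c := hexX_odd (n + 2 * q) (by omega)
    omega

/-- One of any two consecutive positions has residue `≠ 2` modulo `3`, and a shift by `p` takes it to a
position where the opposite value is prescribed. -/
theorem hexD_period_three (p i : ℕ) (hp : p % 6 = 3)
    (HD : ∀ k, k + 1 < p → hexD (i + k) = hexD (i + k + p)) : False := by
  obtain ⟨k, hk, hj⟩ : ∃ k, k < 2 ∧ (i + k) % 3 ≠ 2 := by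
    by_cases h : i % 3 = 2
    · exact ⟨1, by omega, by omega⟩
    · exact ⟨0, by omega, by omega⟩
  have a := HD k (by omega)
  have b := hexD_fixed (i + k) hj
  have c := hexD_fixed (i + k + p) (by omega)
  clear HD
  generalize i + k = j at *
  have h6 : j % 6 < 3 ∨ 3 ≤ j % 6 := by omega
  rcases h6 with h | h
  · have := b.1 h
    have := c.2 (by omega)
    omega
  · have := b.2 h
    have := c.1 (by omega)
    omega

theorem hexD_period_two_four (p i : ℕ) (hp : p % 6 = 2 ∨ p % 6 = 4) (hp4 : 4 ≤ p)
    (HD : ∀ k, k + 1 < p → hexD (i + k) = hexD (i + k + p)) : False := by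
  -- Here every `j` with `j % 3 = 1` (if `p % 6 = 2`) or `j % 3 = 0` (if `p % 6 = 4`) is shifted to
  -- a position where the opposite value is prescribed.
  obtain ⟨k, hk, hj⟩ : ∃ k, k < 3 ∧
      ((p % 6 = 2 ∧ (i + k) % 3 = 1) ∨ (p % 6 = 4 ∧ (i + k) % 3 = 0)) := by
    rcases hp with h | h
    · exact ⟨(i * 2 + 1) % 3, by omega, by omega⟩
    · exact ⟨(i * 2) % 3, by omega, by omega⟩
  have a := HD k (by omega)
  have b := hexD_local (i + k)
  have c := hexD_local (i + k + p)
  clear HD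
  generalize i + k = j at *
  have h6 : j % 6 = 0 ∨ j % 6 = 1 ∨ j % 6 = 3 ∨ j % 6 = 4 := by omega
  rcases h6 with h | h | h | h <;> rcases hp with hp | hp <;> omega

theorem hexD_period_one_five (p i : ℕ) (hp : p % 6 = 1 ∨ p % 6 = 5) (hp11 : 11 ≤ p)
    (HD : ∀ k, k + 1 < p → hexD (i + k) = hexD (i + k + p)) : False := by
  -- Three consecutive positions `3n+2` in the window are shifted to prescribed values.
  obtain ⟨n, hn1, hn2⟩ : ∃ n, i ≤ 3 * n + 2 ∧ 3 * n + 2 ≤ i + 2 := ⟨i / 3, by omega, by omega⟩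
  have a0 := HD (3 * n + 2 - i) (by omega)
  have a1 := HD (3 * (n + 1) + 2 - i) (by omega)
  have a2 := HD (3 * (n + 2) + 2 - i) (by omega)
  rw [show i + (3 * n + 2 - i) = 3 * n + 2 by omega, hexD_toeplitz] at a0
  rw [show i + (3 * (n + 1) + 2 - i) = 3 * (n + 1) + 2 by omega, hexD_toeplitz] at a1
  rw [show i + (3 * (n + 2) + 2 - i) = 3 * (n + 2) + 2 by omega, hexD_toeplitz] at a2
  have c0 := hexD_local (3 * n + 2 + p)
  have c1 := hexD_local (3 * (n + 1) + 2 + p)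
  have c2 := hexD_local (3 * (n + 2) + 2 + p)
  have := hexD_not_alt n
  clear HD
  rcases Nat.mod_two_eq_zero_or_one n with h | h <;> rcases hp with hp | hp <;> omega

/-- For period `5` the window alone is not contradictory, so the sum over one period is needed. -/
theorem hexD_period_eq_five (i : ℕ)
    (hs : (∑ k ∈ Finset.range 5, hexD (i + k)) % 3 = 0)
    (HD : ∀ k, k + 1 < 5 → hexD (i + k) = hexD (i + k + 5)) : False := by
  have a0 := HD 0 (by norm_num)
  have a1 := HD 1 (by norm_num)
  have a2 := HD 2 (by norm_num)
  have a3 := HD 3 (by norm_num)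
  have b0 := hexD_local (i + 0)
  have b1 := hexD_local (i + 1)
  have b2 := hexD_local (i + 2)
  have b3 := hexD_local (i + 3)
  have b4 := hexD_local (i + 4)
  have b5 := hexD_local (i + 5)
  have b6 := hexD_local (i + 6)
  have b7 := hexD_local (i + 7)
  have b8 := hexD_local (i + 8)
  clear HD
  simp only [Finset.sum_range_succ, Finset.sum_range_zero, Nat.add_assoc, Nat.reduceAdd,
    Nat.add_zero, Nat.zero_add] at *
  have hi : i % 6 = 0 ∨ i % 6 = 1 ∨ i % 6 = 2 ∨ i % 6 = 3 ∨ i % 6 = 4 ∨ i % 6 = 5 := by omega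
  rcases hi with h | h | h | h | h | h <;>
  · simp [Nat.add_mod, h] at b0 b1 b2 b3 b4 b5 b6 b7 b8
    omega

theorem hexD_period_eq_seven (i : ℕ)
    (hs : (∑ k ∈ Finset.range 7, hexD (i + k)) % 3 = 0)
    (HD : ∀ k, k + 1 < 7 → hexD (i + k) = hexD (i + k + 7)) : False := by
  have a0 := HD 0 (by norm_num)
  have a1 := HD 1 (by norm_num)
  have a2 := HD 2 (by norm_num)
  have a3 := HD 3 (by norm_num)
  have a4 := HD 4 (by norm_num)
  have a5 := HD 5 (by norm_num)
  have b0 := hexD_local (i + 0)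
  have b1 := hexD_local (i + 1)
  have b2 := hexD_local (i + 2)
  have b3 := hexD_local (i + 3)
  have b4 := hexD_local (i + 4)
  have b5 := hexD_local (i + 5)
  have b6 := hexD_local (i + 6)
  have b7 := hexD_local (i + 7)
  have b8 := hexD_local (i + 8)
  have b9 := hexD_local (i + 9)
  have b10 := hexD_local (i + 10)
  have b11 := hexD_local (i + 11)
  have b12 := hexD_local (i + 12)
  clear HD
  simp only [Finset.sum_range_succ, Finset.sum_range_zero, Nat.add_assoc, Nat.reduceAdd,
    Nat.add_zero, Nat.zero_add] at *
  have hi : i % 6 = 0 ∨ i % 6 = 1 ∨ i % 6 = 2 ∨ i % 6 = 3 ∨ i % 6 = 4 ∨ i % 6 = 5 := by omega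
  rcases hi with h | h | h | h | h | h <;>
  · simp [Nat.add_mod, h] at b0 b1 b2 b3 b4 b5 b6 b7 b8 b9 b10 b11 b12
    omega

/-- Telescoping: the difference of two letters is the sum of the `hexD` between them. -/
theorem hexX_add (i p : ℕ) :
    hexX (i + p) % 3 = (hexX i + ∑ k ∈ Finset.range p, hexD (i + k)) % 3 := by
  induction p with
  | zero => simp
  | succ p ih =>
    have := hexX_succ (i + p)
    rw [Finset.sum_range_succ, ← Nat.add_assoc]
    omega

theorem hexX_no_square (p : ℕ) : 0 < p → ∀ i, ¬ ∀ k < p, hexX (i + k) = hexX (i + k + p) := by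
  induction p using Nat.strong_induction_on with
  | _ p ih =>
  intro hp i H
  have HD : ∀ k, k + 1 < p → hexD (i + k) = hexD (i + k + p) := by
    intro k hk
    have a := H k (by omega)
    have b := H (k + 1) hk
    rw [show i + (k + 1) = i + k + 1 by ring, show i + k + 1 + p = i + k + p + 1 by ring] at b
    unfold hexD
    rw [a, b]
  have hs : (∑ k ∈ Finset.range p, hexD (i + k)) % 3 = 0 := by
    have h0 := H 0 hp
    rw [Nat.add_zero] at h0
    have := hexX_add i p
    omega
  by_cases h6 : p % 6 = 0
  · obtain ⟨q, rfl⟩ : ∃ q, p = 6 * q := ⟨p / 6, by omega⟩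
    exact ih (2 * q) (by omega) (by omega) (i / 3) (hexX_square_descent q i H)
  by_cases h3 : p % 6 = 3
  · exact hexD_period_three p i h3 HD
  by_cases h24 : (p % 6 = 2 ∨ p % 6 = 4) ∧ 4 ≤ p
  · exact hexD_period_two_four p i h24.1 h24.2 HD
  by_cases h11 : 11 ≤ p
  · exact hexD_period_one_five p i (by omega) h11 HD
  have hsmall : p = 1 ∨ p = 2 ∨ p = 5 ∨ p = 7 := by omega
  rcases hsmall with rfl | rfl | rfl | rfl
  · have := hexD_range i
    simp at hs
    omega
  · -- The two differences sum to `0` modulo `3`, so `D i, D (i+1), D (i+2) = D i` alternate.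
    have h0 : hexD i = hexD (i + 2) := HD 0 (by norm_num)
    have h1 := hexD_not_alt i
    have h2 := hexD_range i
    simp [Finset.sum_range_succ] at hs
    omega
  · exact hexD_period_eq_five i hs HD
  · exact hexD_period_eq_seven i hs HD

/-- For every `t ≥ 0`, the sequence `K_t = π(κ^t(1̄))` is non-repetitive. -/
theorem hexK_nonRep (t : ℕ) : NonRep (hexK t) := by
  rintro w hw ⟨s, r, h⟩
  refine hexX_no_square w.length (List.length_pos_iff.2 hw) s.length fun k hk => ?_
  rw [hexK, hexIter_eq, List.map_map] at h
  have hlen := congrArg List.length h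
  simp only [List.length_append, List.length_map, List.length_range] at hlen
  have key : ∀ j, j < 3 ^ t → (s ++ (w ++ w) ++ r)[j]? = some (hexPi (hexY j)) := by
    intro j hj
    rw [h]
    simp [hj]
  have e1 := key (s.length + k) (by omega)
  have e2 := key (s.length + k + w.length) (by omega)
  have f1 : (s ++ (w ++ w) ++ r)[s.length + k]? = w[k]? := by
    rw [List.append_assoc, List.getElem?_append_right (by omega), List.append_assoc,
      List.getElem?_append_left (by omega)]
    congr 1; omega
  have f2 : (s ++ (w ++ w) ++ r)[s.length + k + w.length]? = w[k]? := by
    rw [List.append_assoc, List.getElem?_append_right (by omega), List.append_assoc,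
      List.getElem?_append_right (by omega), List.getElem?_append_left (by omega)]
    congr 1; omega
  rw [f1] at e1
  rw [f2, e1] at e2
  exact congrArg Fin.val (Option.some.inj e2)
end

section
/- There exist arbitrarily long 4-Thue sequences over an alphabet of 6 symbols: for every n there is a sequence of length n over 6 symbols all of whose d-subsequences, for 1 ≤ d ≤ 4, are non-repetitive. -/
/-- The `d`-subsequence of `s` starting at (0-based) index `i`. -/
def dSubseq {α : Type*} (s : List α) (i d : ℕ) : List α :=
  (List.range s.length).filterMap
    (fun j => if i ≤ j ∧ (j - i) % d = 0 then s[j]? else none)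

/-- A sequence is `k`-Thue if every `d`-subsequence, for `1 ≤ d ≤ k`, is non-repetitive. -/
def IsKThue {α : Type*} (k : ℕ) (s : List α) : Prop :=
  ∀ d, 1 ≤ d → d ≤ k → ∀ i, NonRep (dSubseq s i d)

/-! ### Uniform substitutions preserving square-freeness -/

/-- The image of the infinite word `w` under the `l`-uniform substitution `g`, where `g a k`
is the letter number `k < l` of the block replacing `a`. -/
def substWord {α : Type*} (l : ℕ) (g : Fin 3 → ℕ → α) (w : ℕ → Fin 3) (n : ℕ) : α :=
  g (w (n / l)) (n % l)

/-- The infinite word `a b c c c …`. -/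
def tri (a b c : Fin 3) : ℕ → Fin 3
  | 0 => a
  | 1 => b
  | _ => c

/-- A decidable sufficient condition for the `l`-uniform substitution `g` to preserve
square-freeness. -/
structure Crit {α : Type*} (l : ℕ) (g : Fin 3 → ℕ → α) : Prop where
  two_le : 2 ≤ l
  /-- No square of period less than `l` starts in the first block of the image of `a b c …`; such
  a square stays within the first three blocks. -/
  small : ∀ a b c : Fin 3, a ≠ b → b ≠ c → ∀ i < l, ∀ p < l, 0 < p →
    ∃ k < p, substWord l g (tri a b c) (i + k) ≠ substWord l g (tri a b c) (i + k + p)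
  /-- Windows of length `l` starting at different offsets of a block are different; such a window
  stays within two blocks. -/
  sync : ∀ a b c e : Fin 3, a ≠ b → c ≠ e → ∀ i < l, ∀ j < i,
    ∃ k < l, substWord l g (tri a b b) (i + k) ≠ substWord l g (tri c e e) (j + k)
  /-- No `g b` splits into a prefix shared with a different block and the complementary suffix
  shared with a different block. For `r = 0` this says that `g` is injective on letters. -/
  cut : ∀ a b c : Fin 3, a ≠ b → b ≠ c → ∀ r < l,
    (∃ k < l, r ≤ k ∧ g a k ≠ g b k) ∨ (∃ k < r, g b k ≠ g c k)

lemma subst_block {α : Type*} {l : ℕ} (g : Fin 3 → ℕ → α) (w : ℕ → Fin 3) (j : ℕ) {k : ℕ}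
    (hk : k < l) : substWord l g w (j * l + k) = g (w j) k := by
  have hl : 0 < l := by omega
  unfold substWord
  rw [Nat.add_comm, Nat.add_mul_mod_self_right, Nat.mod_eq_of_lt hk, Nat.add_mul_div_right _ _ hl,
    Nat.div_eq_of_lt hk, Nat.zero_add]

/-- Three consecutive blocks of the image depend only on three consecutive letters. -/
lemma subst_tri {α : Type*} {l : ℕ} (g : Fin 3 → ℕ → α) (w : ℕ → Fin 3) (j : ℕ) {n : ℕ}
    (hn : n < 3 * l) :
    substWord l g w (j * l + n) = substWord l g (tri (w j) (w (j + 1)) (w (j + 2))) n := by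
  have hl : 0 < l := by omega
  have h3 : n / l < 3 := Nat.div_lt_of_lt_mul (by rwa [Nat.mul_comm])
  unfold substWord
  rw [Nat.add_comm, Nat.add_mul_mod_self_right, Nat.add_mul_div_right _ _ hl, Nat.add_comm]
  generalize n / l = s at *
  interval_cases s <;> rfl

/-- Two consecutive blocks of the image depend only on two consecutive letters. -/
lemma subst_tri' {α : Type*} {l : ℕ} (g : Fin 3 → ℕ → α) (w : ℕ → Fin 3) (j : ℕ) {n : ℕ}
    (hn : n < 2 * l) :
    substWord l g w (j * l + n) = substWord l g (tri (w j) (w (j + 1)) (w (j + 1))) n := by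
  have hl : 0 < l := by omega
  have h3 : n / l < 2 := Nat.div_lt_of_lt_mul (by rwa [Nat.mul_comm])
  unfold substWord
  rw [Nat.add_comm, Nat.add_mul_mod_self_right, Nat.add_mul_div_right _ _ hl, Nat.add_comm]
  generalize n / l = s at *
  interval_cases s <;> rfl

namespace Crit

variable {α : Type*} {l : ℕ} {g : Fin 3 → ℕ → α} {w : ℕ → Fin 3}

lemma not_lt_of_window_eq (H : Crit l g) (hw : ∀ n, w n ≠ w (n + 1)) {t u : ℕ}
    (h : ∀ k < l, substWord l g w (t + k) = substWord l g w (u + k)) : ¬ u % l < t % l := by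
  intro hlt
  have hl : 0 < l := by have := H.two_le; omega
  have ht := Nat.mod_lt t hl
  obtain ⟨k, hk, hne⟩ := H.sync _ _ _ _ (hw (t / l)) (hw (u / l)) (t % l) ht (u % l) hlt
  apply hne
  rw [← subst_tri' g w _ (by omega), ← subst_tri' g w _ (by omega), ← Nat.add_assoc,
    ← Nat.add_assoc, Nat.div_add_mod', Nat.div_add_mod']
  exact h k hk

lemma mod_eq_of_window_eq (H : Crit l g) (hw : ∀ n, w n ≠ w (n + 1)) {t u : ℕ}
    (h : ∀ k < l, substWord l g w (t + k) = substWord l g w (u + k)) : t % l = u % l :=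
  le_antisymm (not_lt.1 (H.not_lt_of_window_eq hw h))
    (not_lt.1 (H.not_lt_of_window_eq hw fun k hk => (h k hk).symm))

lemma eq_of_block_eq (H : Crit l g) {a b : Fin 3} (h : ∀ k < l, g a k = g b k) : a = b := by
  by_contra hab
  obtain ⟨c, hc⟩ : ∃ c, b ≠ c := ⟨b + 1, by clear h hab; revert b; decide⟩
  rcases H.cut a b c hab hc 0 (by have := H.two_le; omega) with ⟨k, hk, -, hne⟩ | ⟨k, hk, -⟩
  · exact hne (h k hk)
  · omega

/-- A square in the image of `w` comes from a square of smaller period in `w`. -/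
theorem desquare (H : Crit l g) (hw : ∀ n, w n ≠ w (n + 1)) {t p : ℕ} (hp : 0 < p)
    (hsq : ∀ k < p, substWord l g w (t + k) = substWord l g w (t + k + p)) :
    ∃ q, 0 < q ∧ q < p ∧ ∃ j, ∀ s < q, w (j + s) = w (j + s + q) := by
  have hl2 := H.two_le
  have hl : 0 < l := by omega
  have hi := Nat.mod_lt t hl
  have hdm := Nat.div_add_mod' t l
  rcases lt_or_ge p l with hpl | hpl
  · exfalso
    obtain ⟨k, hk, hne⟩ := H.small _ _ _ (hw (t / l)) (hw (t / l + 1)) (t % l) hi p hpl hp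
    apply hne
    have e : t / l + 1 + 1 = t / l + 2 := rfl
    rw [e, ← subst_tri g w _ (by omega), ← subst_tri g w _ (by omega)]
    have := hsq k hk
    rw [← hdm] at this
    simpa only [Nat.add_assoc] using this
  · have hmod : t % l = (t + p) % l := H.mod_eq_of_window_eq hw fun k hk => by
      rw [hsq k (by omega)]; congr 1; omega
    obtain ⟨q, rfl⟩ : l ∣ p := by
      have : t ≡ t + p [MOD l] := hmod
      have h2 := (Nat.modEq_iff_dvd' (Nat.le_add_right t p)).1 this
      simpa using h2
    rw [Nat.mul_comm l q] at *
    have hq : 0 < q := Nat.pos_of_mul_pos_right hp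
    generalize t / l = j at *
    generalize t % l = i at *
    subst hdm
    -- The square, read blockwise with `t = j * l + i`: block `j + s` agrees with block `j + s + q`
    -- at every position of the first half.
    have shift : ∀ s k, k < l → i ≤ s * l + k → s * l + k < i + q * l →
        g (w (j + s)) k = g (w (j + s + q)) k := by
      intro s k hk h1 h2
      have := hsq (s * l + k - i) (by omega)
      rw [← subst_block g w _ hk, ← subst_block g w _ hk]
      convert this using 2 <;> simp only [Nat.add_mul] <;> omega
    -- The blocks strictly between `j` and `j + q` lie entirely in the first half.
    have mid : ∀ s, 0 < s → s < q → w (j + s) = w (j + s + q) := by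
      intro s hs hsq'
      apply H.eq_of_block_eq
      intro k hk
      have h1 := Nat.mul_le_mul_right l (show 1 ≤ s from hs)
      have h2 := Nat.mul_le_mul_right l (show s + 1 ≤ q from hsq')
      rw [Nat.add_mul] at h2
      exact shift s k hk (by omega) (by omega)
    -- The first half ends with the first `i` letters of block `j + q` and starts with the last
    -- `l - i` letters of block `j`, which is the situation of `cut`.
    have ends : w j = w (j + q) ∨ w (j + q) = w (j + q + q) := by
      by_contra! hcon
      rcases H.cut _ _ _ hcon.1 hcon.2 i hi with ⟨k, hk, hik, hne⟩ | ⟨k, hk, hne⟩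
      · exact hne (shift 0 k hk (by omega) (by omega))
      · have h1 := Nat.mul_le_mul_right l (show 1 ≤ q from hq)
        exact hne (shift q k (by omega) (by omega) (by omega))
    refine ⟨q, hq, by nlinarith, ?_⟩
    rcases ends with h | h
    · refine ⟨j, fun s hs => ?_⟩
      rcases Nat.eq_zero_or_pos s with rfl | h0
      · exact h
      · exact mid s h0 hs
    · refine ⟨j + 1, fun s hs => ?_⟩
      rw [Nat.add_assoc j 1 s, Nat.add_comm 1 s]
      rcases Nat.lt_or_ge (s + 1) q with h0 | h0
      · exact mid _ (by omega) h0
      · obtain rfl : s + 1 = q := by omega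
        exact h

end Crit

/-! ### An infinite square-free ternary word -/

/-- Leech's substitution `0 ↦ 0121021201210`; the other images are its cyclic relabellings. -/
def leech (a : Fin 3) (k : ℕ) : Fin 3 :=
  [0, 1, 2, 1, 0, 2, 1, 2, 0, 1, 2, 1, 0].getD k 0 + a

/-- The fixed point of `leech` that starts with `0`. -/
def leechWord : ℕ → Fin 3
  | 0 => 0
  | n + 1 => leech (leechWord ((n + 1) / 13)) ((n + 1) % 13)
decreasing_by omega

set_option maxRecDepth 100000 in
lemma crit_leech : Crit 13 leech :=
  ⟨by decide, by decide +kernel, by decide +kernel, by decide +kernel⟩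

lemma leechWord_eq (n : ℕ) : leechWord n = substWord 13 leech leechWord n := by
  cases n with
  | zero => simp [substWord, leechWord, leech]
  | succ n => rw [leechWord]; rfl

lemma leechWord_ne (n : ℕ) : leechWord n ≠ leechWord (n + 1) := by
  induction n using Nat.strong_induction_on with
  | _ n ih =>
    rw [leechWord_eq n, leechWord_eq (n + 1)]
    unfold substWord
    have inner : ∀ a : Fin 3, ∀ k < 12, leech a k ≠ leech a (k + 1) := by decide
    have border : ∀ a b : Fin 3, a ≠ b → leech a 12 ≠ leech b 0 := by decide
    by_cases hk : n % 13 < 12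
    · rw [show (n + 1) / 13 = n / 13 by omega, show (n + 1) % 13 = n % 13 + 1 by omega]
      exact inner _ _ hk
    · rw [show (n + 1) / 13 = n / 13 + 1 by omega, show (n + 1) % 13 = 0 by omega,
        show n % 13 = 12 by omega]
      exact border _ _ (ih _ (by omega))

lemma leechWord_squarefree (p : ℕ) (hp : 0 < p) (t : ℕ) :
    ¬ ∀ k < p, leechWord (t + k) = leechWord (t + k + p) := by
  induction p using Nat.strong_induction_on generalizing t with
  | _ p ih =>
    intro h
    obtain ⟨q, hq, hqp, j, hj⟩ := crit_leech.desquare leechWord_ne (t := t) hp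
      (fun k hk => by rw [← leechWord_eq, ← leechWord_eq]; exact h k hk)
    exact ih q hqp hq j hj

/-! ### The six-letter word -/

/-- The three blocks of the 12-uniform substitution into six letters. -/
def hexaBlock : Fin 3 → List (Fin 6)
  | 0 => [5, 0, 2, 4, 3, 5, 1, 0, 2, 3, 4, 1]
  | 1 => [5, 0, 2, 4, 1, 3, 0, 5, 4, 2, 1, 3]
  | 2 => [5, 0, 2, 4, 1, 3, 5, 2, 0, 1, 4, 3]

/-- The substitution with blocks `hexaBlock`; the default `0` is never used for `k < 12`. -/
def hexa (a : Fin 3) (k : ℕ) : Fin 6 := (hexaBlock a).getD k 0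

/-- The substitution obtained from `hexa` by keeping the positions `≡ r (mod d)` of each block. -/
def hexaSub (d r : ℕ) (a : Fin 3) (k : ℕ) : Fin 6 := hexa a (d * k + r)

set_option maxRecDepth 100000 in
lemma crit_hexaSub : ∀ d, 1 ≤ d → d ≤ 4 → ∀ r < d, Crit (12 / d) (hexaSub d r) := by
  intro d h1 h4 r hr
  interval_cases d <;> interval_cases r <;>
    exact ⟨by decide, by decide +kernel, by decide +kernel, by decide +kernel⟩

/-- The infinite 4-Thue word. -/
def thueWord : ℕ → Fin 6 := substWord 12 hexa leechWord

/-- Each residue class of positions of `thueWord` spells an image of `leechWord`. -/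
lemma thueWord_residue {d r : ℕ} (h1 : 1 ≤ d) (h4 : d ≤ 4) (hr : r < d) (n : ℕ) :
    thueWord (d * n + r) = substWord (12 / d) (hexaSub d r) leechWord n := by
  unfold thueWord substWord hexaSub
  congr 1
  · congr 1
    interval_cases d <;> omega
  · interval_cases d <;> omega

lemma thueWord_squarefree {d : ℕ} (h1 : 1 ≤ d) (h4 : d ≤ 4) (i : ℕ) {p : ℕ} (hp : 0 < p) (t : ℕ) :
    ¬ ∀ k < p, thueWord (i + d * (t + k)) = thueWord (i + d * (t + k + p)) := by
  intro h
  have hr := Nat.mod_lt i h1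
  have key : ∀ n, thueWord (i + d * n) =
      substWord (12 / d) (hexaSub d (i % d)) leechWord (i / d + n) := by
    intro n
    rw [← thueWord_residue h1 h4 hr, Nat.mul_add]
    congr 1
    have := Nat.div_add_mod i d
    omega
  obtain ⟨q, hq, -, j, hj⟩ := (crit_hexaSub d h1 h4 _ hr).desquare leechWord_ne
    (t := i / d + t) hp (fun k hk => by
      have := h k hk
      rw [key, key] at this
      simpa only [Nat.add_assoc] using this)
  exact leechWord_squarefree q hq j hj

/-! ### Finite prefixes -/

lemma dSubseq_map_range {α : Type*} (x : ℕ → α) {d : ℕ} (h1 : 1 ≤ d) (h4 : d ≤ 4) (i n : ℕ) :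
    dSubseq ((List.range n).map x) i d =
      (List.range ((n - i + (d - 1)) / d)).map fun k => x (i + d * k) := by
  have e : dSubseq ((List.range n).map x) i d =
      (List.range n).filterMap fun j => if i ≤ j ∧ (j - i) % d = 0 then some (x j) else none := by
    unfold dSubseq
    rw [List.length_map, List.length_range]
    apply List.filterMap_congr
    intro j hj
    rw [List.mem_range] at hj
    simp [hj]
  rw [e]
  clear e
  induction n with
  | zero =>
    have : (0 - i + (d - 1)) / d = 0 := Nat.div_eq_of_lt (by omega)
    rw [this]; rfl
  | succ n ih =>
    rw [List.range_succ, List.filterMap_append, ih]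
    by_cases hc : i ≤ n ∧ (n - i) % d = 0
    · have e1 : (n + 1 - i + (d - 1)) / d = (n - i + (d - 1)) / d + 1 := by
        interval_cases d <;> omega
      have e2 : i + d * ((n - i + (d - 1)) / d) = n := by
        interval_cases d <;> omega
      rw [e1, List.range_succ, List.map_append]
      simp [hc, e2]
    · have e1 : (n + 1 - i + (d - 1)) / d = (n - i + (d - 1)) / d := by
        interval_cases d <;> omega
      rw [e1]
      simp [hc]

lemma nonRep_map_range {α : Type*} (f : ℕ → α) (m : ℕ)
    (hf : ∀ p, 0 < p → ∀ t, ¬ ∀ k < p, f (t + k) = f (t + k + p)) :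
    NonRep ((List.range m).map f) := by
  rintro v hv ⟨a, b, hab⟩
  refine hf v.length (List.length_pos_iff.2 hv) a.length fun k hk => ?_
  have hlen := congrArg List.length hab
  simp only [List.length_append, List.length_map, List.length_range] at hlen
  have g1 := congrArg (fun L => L[a.length + k]?) hab
  have g2 := congrArg (fun L => L[a.length + k + v.length]?) hab
  have b1 : a.length + k < m := by omega
  have b2 : a.length + k + v.length < m := by omega
  have c1 : (a ++ (v ++ v) ++ b)[a.length + k]? = v[k]? := by
    rw [List.append_assoc, List.getElem?_append_right (by omega), List.append_assoc,
      List.getElem?_append_left (by omega)]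
    congr 1; omega
  have c2 : (a ++ (v ++ v) ++ b)[a.length + k + v.length]? = v[k]? := by
    rw [List.append_assoc, List.getElem?_append_right (by omega), List.append_assoc,
      List.getElem?_append_right (by omega), List.getElem?_append_left (by omega)]
    congr 1; omega
  simp only [c1, c2] at g1 g2
  have := g1.symm.trans g2
  simpa [b1, b2] using this

/-- There exist 4-Thue sequences of every length over an alphabet of 6 symbols. -/
theorem exists_fourThue_six_symbols (n : ℕ) :
    ∃ s : List (Fin 6), s.length = n ∧ IsKThue 4 s := by
  refine ⟨(List.range n).map thueWord, by simp, fun d h1 h4 i => ?_⟩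
  rw [dSubseq_map_range _ h1 h4]
  exact nonRep_map_range _ _ fun p hp t => thueWord_squarefree h1 h4 i hp t
end
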